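/- arXiv:2203.04418 — 6 statements merged into one kernel-verified Lean document; each statement's English description precedes it below -/
import Mathlib

section
/- Let X be a finite set with |X| = n ≥ 2. Then the diameter of the set of total preorders on X with respect to the top-difference semimetric D equals n·2^{n−1} + 2 − 2^{⌊n/2⌋} − 2^{⌈n/2⌉}; that is, D(≿,⊵) ≤ n·2^{n−1} + 2 − 2^{⌊n/2⌋} − 2^{⌈n/2⌉} for all total preorders ≿, ⊵ on X, and this bound is attained by some pair of total preorders. -/
open Classical Finset symmDiff

section PrefDefs

variable {X : Type*}

/-- The asymmetric part `R^>` of a binary relation `R`. -/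
def asymPart (R : X → X → Prop) : X → X → Prop := fun x y => R x y ∧ ¬ R y x

/-- `R` is acyclic: there is no cycle of pairwise distinct elements
`z_0 R^> z_1 R^> ⋯ R^> z_k R^> z_0`. -/
def AcyclicRel (R : X → X → Prop) : Prop :=
  ¬ ∃ (k : ℕ) (z : Fin (k + 1) → X), Function.Injective z ∧
      ∀ i : Fin (k + 1), asymPart R (z i) (z (i + 1))

/-- An acyclic order: a reflexive acyclic binary relation. -/
def AcyclicOrd (R : X → X → Prop) : Prop := Reflexive R ∧ AcyclicRel R

/-- `M(S,R)`: the set of `R`-maximal elements of `S`. -/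
noncomputable def MaxSet [DecidableEq X] (S : Finset X) (R : X → X → Prop) : Finset X :=
  S.filter fun x => ∀ y ∈ S, ¬ asymPart R y x

/-- The μ-top-difference semimetric, where the measure μ is given by the
weights `w x = μ {x}`. -/
noncomputable def Dmu [Fintype X] [DecidableEq X] (w : X → ℝ) (R R' : X → X → Prop) : ℝ :=
  ∑ S : Finset X, ∑ x ∈ symmDiff (MaxSet S R) (MaxSet S R'), w x

/-- The top-difference semimetric `D`. -/
noncomputable def Dtop [Fintype X] [DecidableEq X] (R R' : X → X → Prop) : ℕ :=
  ∑ S : Finset X, (symmDiff (MaxSet S R) (MaxSet S R')).card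

/-- `≿ ⊕ (a,b)`: if `b ∼ a` delete `(b,a)`, if `a, b` are `≿`-incomparable add `(a,b)`. -/
def oplusR (R : X → X → Prop) (a b : X) : X → X → Prop :=
  fun x y => (R x y ∧ ¬(R b a ∧ x = b ∧ y = a)) ∨ (¬ R b a ∧ x = a ∧ y = b)

/-- `≿ ⊖ (a,b)`: delete the pair `(a,b)`. -/
def ominusR (R : X → X → Prop) (a b : X) : X → X → Prop :=
  fun x y => R x y ∧ ¬(x = a ∧ y = b)

/-- `≿ → ≿_0 ↠ ⊵` : `R0` is a one-step perturbation of `R` toward `R'`. -/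
def OneStep (R R0 R' : X → X → Prop) : Prop :=
  AcyclicOrd R0 ∧
  ((∃ a b, asymPart R a b ∧ ¬ asymPart R' a b ∧
      (∀ x, asymPart R' x b → asymPart R x b) ∧ R0 = ominusR R a b) ∨
   (∃ a b, ¬ asymPart R a b ∧ ¬ asymPart R b a ∧ asymPart R' a b ∧ R0 = oplusR R a b))

/-- `Q` is in-between `R` and `R'` : `Q` is an n-step perturbation of `R` toward `R'`
for some positive integer n. -/
def InBetween (R R' Q : X → X → Prop) : Prop :=
  ∃ (n : ℕ) (c : Fin (n + 1) → (X → X → Prop)),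
    OneStep R (c 0) R' ∧
    (∀ i : Fin n, OneStep (c i.castSucc) (c i.succ) R') ∧
    c (Fin.last n) = Q

/-- `N(b,≿)`: the number of `x ≠ b` with not `x ≻ b`. -/
noncomputable def Nnum [Fintype X] (R : X → X → Prop) (b : X) : ℕ :=
  (Finset.univ.filter fun x => x ≠ b ∧ ¬ asymPart R x b).card

/-- `≿_{ab}`: the partial order whose asymmetric part is `(X \ {a,b}) × {a,b}`. -/
def RabRel (a b : X) : X → X → Prop :=
  fun x y => x = y ∨ ((x ≠ a ∧ x ≠ b) ∧ (y = a ∨ y = b))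

/-- `≿_{ab}^+`: as `≿_{ab}` but with `a` ranked strictly above `b`. -/
def RabPlusRel (a b : X) : X → X → Prop :=
  fun x y => RabRel a b x y ∨ (x = a ∧ y = b)

/-- `d` is a semimetric on the set of acyclic orders on `X`. -/
def IsSemimetricOn (d : (X → X → Prop) → (X → X → Prop) → ℝ) : Prop :=
  (∀ R R', AcyclicOrd R → AcyclicOrd R' → 0 ≤ d R R') ∧
  (∀ R, AcyclicOrd R → d R R = 0) ∧
  (∀ R R', AcyclicOrd R → AcyclicOrd R' → d R R' = d R' R) ∧
  (∀ R R' R'', AcyclicOrd R → AcyclicOrd R' → AcyclicOrd R'' →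
    d R R'' ≤ d R R' + d R' R'')

/-- Axiom 1. -/
def Axiom1 (d : (X → X → Prop) → (X → X → Prop) → ℝ) : Prop :=
  ∀ R R0 R' : X → X → Prop, AcyclicOrd R → AcyclicOrd R' →
    InBetween R R' R0 → d R R' = d R R0 + d R0 R'

/-- Axiom 2. -/
def Axiom2 (d : (X → X → Prop) → (X → X → Prop) → ℝ) : Prop :=
  ∀ a b : X, a ≠ b → d (RabRel a b) (RabPlusRel a b) = 1

/-- Axiom 3. -/
def Axiom3 [Fintype X] (d : (X → X → Prop) → (X → X → Prop) → ℝ) : Prop :=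
  (∀ (R : X → X → Prop) (a b : X), AcyclicOrd R → a ≠ b →
      ¬ asymPart R a b → ¬ asymPart R b a → AcyclicOrd (oplusR R a b) →
      d R (oplusR R a b) = (2 : ℝ) ^ (Nnum R b - 1) * d (RabRel a b) (RabPlusRel a b)) ∧
  (∀ (R : X → X → Prop) (a b : X), AcyclicOrd R → asymPart R a b →
      d R (ominusR R a b) = (2 : ℝ) ^ (Nnum R b) * d (RabRel a b) (RabPlusRel a b))

/-- Axiom 4. -/
def Axiom4 (d : (X → X → Prop) → (X → X → Prop) → ℝ) : Prop :=
  ∀ R R' : X → X → Prop, AcyclicOrd R → AcyclicOrd R' →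
    (∀ x y, asymPart R x y ↔ asymPart R' x y) → d R R' = 0

end PrefDefs


/-- A total preorder: reflexive, transitive and total. -/
def TotalPreorderRel {X : Type*} (R : X → X → Prop) : Prop :=
  Reflexive R ∧ Transitive R ∧ Total R

/-! ### Counting non-bicliques in a graph -/

theorem aux_pow (n : ℕ) (hn : 2 ≤ n) : 2 ^ (n / 2) ≤ 2 ^ (n - 2) + 1 := by
  rcases Nat.lt_or_ge n 4 with h | h
  · interval_cases n <;> norm_num
  · have : 2 ^ (n / 2) ≤ 2 ^ (n - 2) := Nat.pow_le_pow_right (by norm_num) (by omega)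
    omega

theorem aux_split {X : Type*} [DecidableEq X] (Bad : Finset X → Prop) (W : Finset X) (v : X)
    (hv : v ∈ W) :
    (W.powerset.filter Bad).card = ((W.erase v).powerset.filter Bad).card
      + ((W.erase v).powerset.filter fun S => Bad (insert v S)).card := by
  have h1 := Finset.sum_powerset_insert (notMem_erase v W) (fun S => if Bad S then 1 else 0)
  rw [insert_erase hv] at h1
  simpa only [card_filter] using h1

theorem aux_count {X : Type*} [DecidableEq X] (r : X → X → Prop) (Bad : Finset X → Prop)
    (hs : ∀ x y, r x y → r y x) (hi : ∀ x, ¬ r x x)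
    (h1 : ∀ S v, v ∈ S → (∀ u ∈ S, ¬ r v u) → Bad S)
    (h2 : ∀ S x y z, x ∈ S → y ∈ S → z ∈ S → r x y → r y z → r x z → Bad S) :
    ∀ (n : ℕ) (W : Finset X), W.card = n →
      2 ^ (n / 2) + 2 ^ ((n + 1) / 2) ≤ (W.powerset.filter Bad).card + 2 := by
  intro n
  induction n with
  | zero => intro W _; norm_num
  | succ n ih =>
    intro W hW
    suffices H : ∃ v ∈ W, 2 ^ (n / 2) ≤
        ((W.erase v).powerset.filter fun S => Bad (insert v S)).card by
      obtain ⟨v, hv, hc⟩ := H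
      have h3 := ih (W.erase v) (by rw [card_erase_of_mem hv]; omega)
      rw [aux_split Bad W v hv]
      have h4 : (n + 1 + 1) / 2 = n / 2 + 1 := by omega
      rw [h4, pow_succ]
      omega
    by_cases hc : ∃ v ∈ W, n / 2 ≤ ((W.erase v).filter fun u => ¬ r v u).card
    · obtain ⟨v, hv, hc⟩ := hc
      refine ⟨v, hv, (Nat.pow_le_pow_right (by norm_num) hc).trans ?_⟩
      rw [← card_powerset]
      apply card_le_card
      intro S hS
      rw [mem_powerset] at hS
      rw [mem_filter, mem_powerset]
      refine ⟨hS.trans (filter_subset _ _), h1 _ v (mem_insert_self _ _) ?_⟩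
      intro u hu
      rcases mem_insert.1 hu with rfl | hu
      · exact hi _
      · exact (mem_filter.1 (hS hu)).2
    · push Not at hc
      have hne : W.Nonempty := by rw [← card_pos]; omega
      obtain ⟨v, hv⟩ := hne
      have hdeg : ∀ v ∈ W, n < ((W.filter fun u => r v u).card) + n / 2 := by
        intro v hv
        have a1 := hc v hv
        have a2 := card_filter_add_card_filter_not (s := W.erase v) (fun u => r v u)
        have a3 : (W.erase v).filter (fun u => r v u) = W.filter (fun u => r v u) := by
          ext u; simp only [mem_filter, mem_erase]
          constructor
          · rintro ⟨⟨_, a⟩, b⟩; exact ⟨a, b⟩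
          · rintro ⟨a, b⟩; refine ⟨⟨?_, a⟩, b⟩
            rintro rfl; exact hi _ b
        rw [a3, card_erase_of_mem hv] at a2
        omega
      have hn : 2 ≤ n := by have := hc v hv; omega
      have hu : (W.filter fun u => r v u).Nonempty := by
        rw [← card_pos]; have := hdeg v hv; omega
      obtain ⟨u, hu⟩ := hu
      obtain ⟨hu, hvu⟩ := mem_filter.1 hu
      have hw : ((W.filter fun x => r v x) ∩ (W.filter fun x => r u x)).Nonempty := by
        rw [← card_pos]
        have b1 := hdeg v hv
        have b2 := hdeg u hu
        have b3 := card_union_add_card_inter (W.filter fun x => r v x) (W.filter fun x => r u x)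
        have b4 : ((W.filter fun x => r v x) ∪ (W.filter fun x => r u x)).card ≤ W.card :=
          card_le_card (union_subset (filter_subset _ _) (filter_subset _ _))
        omega
      obtain ⟨w, hw⟩ := hw
      simp only [mem_inter, mem_filter] at hw
      obtain ⟨⟨hwW, hvw⟩, -, huw⟩ := hw
      have huv : u ≠ v := by rintro rfl; exact hi _ hvu
      have hwv : w ≠ v := by rintro rfl; exact hi _ hvw
      have huw' : u ≠ w := by rintro rfl; exact hi _ huw
      refine ⟨v, hv, ?_⟩
      have hsub : ({u, w} : Finset X) ⊆ W.erase v := by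
        intro x hx
        simp only [mem_insert, mem_singleton] at hx
        rcases hx with rfl | rfl <;> simp [*]
      have hcard := card_Icc_finset hsub
      rw [card_pair huw', card_erase_of_mem hv, hW, Nat.add_sub_cancel] at hcard
      have hnot : ∅ ∉ Icc ({u, w} : Finset X) (W.erase v) := by
        intro h
        have := (mem_Icc.1 h).1 (mem_insert_self u _)
        simp at this
      have hcard2 := card_insert_of_notMem hnot
      refine (aux_pow n hn).trans ?_
      rw [← hcard, ← hcard2]
      apply card_le_card
      intro S hS
      rw [mem_filter, mem_powerset]
      rcases mem_insert.1 hS with rfl | hS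
      · refine ⟨empty_subset _, h1 _ v (mem_insert_self _ _) ?_⟩
        intro x hx
        simp only [mem_insert, notMem_empty, or_false] at hx
        subst hx; exact hi _
      · obtain ⟨ha, hb⟩ := mem_Icc.1 hS
        refine ⟨hb, h2 _ v u w (mem_insert_self _ _) ?_ ?_ hvu huw hvw⟩
        · exact mem_insert_of_mem (ha (by simp))
        · exact mem_insert_of_mem (ha (by simp))

theorem aux_sum_card (X : Type*) [Fintype X] :
    ∑ S : Finset X, S.card = Fintype.card X * 2 ^ (Fintype.card X - 1) := by
  have h := sum_powerset_apply_card (fun k => k) (x := (univ : Finset X))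
  rw [powerset_univ] at h
  rw [h, ← Nat.sum_range_mul_choose, card_univ]
  exact sum_congr rfl fun i _ => by rw [smul_eq_mul, mul_comm]

/-! ### Upper bound -/

theorem aux_max_exists {X : Type*} [Fintype X] [DecidableEq X] (R : X → X → Prop)
    (hR : TotalPreorderRel R) (S : Finset X) (hS : S.Nonempty) :
    ∃ y ∈ S, ∀ z ∈ S, R y z := by
  obtain ⟨hr, ht, hT⟩ := hR
  obtain ⟨y, hy, hm⟩ := exists_max_image S (fun y => (univ.filter fun z => R y z).card) hS
  refine ⟨y, hy, fun z hz => ?_⟩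
  by_contra hyz
  have hzy : R z y := (hT z y).resolve_right hyz
  have : (univ.filter fun w => R y w).card < (univ.filter fun w => R z w).card := by
    apply card_lt_card
    rw [ssubset_iff_of_subset]
    · exact ⟨z, by simp [hr z], by simp [hyz]⟩
    · intro w hw
      simp only [mem_filter, mem_univ, true_and] at hw ⊢
      exact ht hzy hw
  exact absurd (hm z hz) (by simpa using this)

theorem aux_mem {X : Type*} [DecidableEq X] (R : X → X → Prop)
    (hR : TotalPreorderRel R) (S : Finset X) (x : X) :
    x ∈ MaxSet S R ↔ x ∈ S ∧ ∀ y ∈ S, R x y := by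
  obtain ⟨hr, ht, hT⟩ := hR
  unfold MaxSet
  rw [mem_filter]
  unfold asymPart
  refine and_congr_right fun _ => forall₂_congr fun y _ => ?_
  have := hT x y
  tauto

theorem aux_half {X : Type*} [Fintype X] [DecidableEq X] (R R' : X → X → Prop)
    (hR : TotalPreorderRel R) (hR' : TotalPreorderRel R') (S : Finset X)
    (hS : ∀ x ∈ S, ¬ (x ∈ MaxSet S R ↔ x ∈ MaxSet S R')) (v : X)
    (hv : v ∈ MaxSet S R) : ∃ u ∈ S, ¬ R u v ∧ ¬ R' v u := by
  have hvS : v ∈ S := ((aux_mem R hR S v).1 hv).1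
  obtain ⟨y, hy, hm⟩ := aux_max_exists R' hR' S ⟨v, hvS⟩
  have hyM : y ∈ MaxSet S R' := (aux_mem R' hR' S y).2 ⟨hy, hm⟩
  have hyN : y ∉ MaxSet S R := fun h => hS y hy ⟨fun _ => hyM, fun _ => h⟩
  have hvN : v ∉ MaxSet S R' := fun h => hS v hvS ⟨fun _ => h, fun _ => hv⟩
  rw [aux_mem R hR] at hyN hv
  rw [aux_mem R' hR'] at hvN
  refine ⟨y, hy, fun h => hyN ⟨hy, fun z hz => hR.2.1 h (hv.2 z hz)⟩,
    fun h => hvN ⟨hvS, fun z hz => hR'.2.1 h (hm z hz)⟩⟩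

theorem aux_prop1 {a b a' b' : Prop} (e1 : ¬ (a ↔ a')) (e2 : ¬ (b ↔ b'))
    (o1 : ¬ (a ∧ b)) (o2 : ¬ (a' ∧ b')) : a ↔ ¬ b := by
  by_cases a <;> by_cases b <;> by_cases a' <;> by_cases b' <;> simp_all

theorem aux_prop2 {a b c : Prop} (k1 : a ↔ ¬ b) (k2 : b ↔ ¬ c) (k3 : a ↔ ¬ c) : False := by
  by_cases a <;> by_cases b <;> by_cases c <;> simp_all

theorem aux_upper {X : Type*} [Fintype X] [DecidableEq X] (R R' : X → X → Prop)
    (hR : TotalPreorderRel R) (hR' : TotalPreorderRel R') :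
    Dtop R R' + 2 ^ (Fintype.card X / 2) + 2 ^ ((Fintype.card X + 1) / 2) ≤
      Fintype.card X * 2 ^ (Fintype.card X - 1) + 2 := by
  let Bad : Finset X → Prop := fun S => ∃ x ∈ S, (x ∈ MaxSet S R ↔ x ∈ MaxSet S R')
  let r : X → X → Prop := fun x y => (¬ R y x ∧ ¬ R' x y) ∨ (¬ R x y ∧ ¬ R' y x)
  have hcount := aux_count r Bad (fun x y h => h.symm)
    (fun x h => by rcases h with h | h <;> exact h.1 (hR.1 x))
    (by
      intro S v hv hn
      by_contra hb
      have hb' : ∀ x ∈ S, ¬ (x ∈ MaxSet S R ↔ x ∈ MaxSet S R') :=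
        fun x hx h => hb ⟨x, hx, h⟩
      by_cases hm : v ∈ MaxSet S R
      · obtain ⟨u, hu, h⟩ := aux_half R R' hR hR' S hb' v hm
        exact hn u hu (Or.inl h)
      · have hm' : v ∈ MaxSet S R' := by
          by_contra h
          exact hb' v hv ⟨fun a => absurd a hm, fun a => absurd a h⟩
        obtain ⟨u, hu, h⟩ := aux_half R' R hR' hR S (fun x hx h => hb' x hx h.symm) v hm'
        exact hn u hu (Or.inr h.symm))
    (by
      intro S x y z hx hy hz hxy hyz hxz
      by_contra hb
      have hb' : ∀ x ∈ S, ¬ (x ∈ MaxSet S R ↔ x ∈ MaxSet S R') :=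
        fun x hx h => hb ⟨x, hx, h⟩
      have k : ∀ a b, a ∈ S → b ∈ S → r a b → (a ∈ MaxSet S R ↔ ¬ b ∈ MaxSet S R) := by
        intro a b ha hb hab
        have e1 := hb' a ha
        have e2 := hb' b hb
        have o1 : ¬ (a ∈ MaxSet S R ∧ b ∈ MaxSet S R) := by
          rw [aux_mem R hR, aux_mem R hR]
          rintro ⟨⟨-, p⟩, -, q⟩
          rcases hab with h | h
          · exact h.1 (q a ha)
          · exact h.1 (p b hb)
        have o2 : ¬ (a ∈ MaxSet S R' ∧ b ∈ MaxSet S R') := by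
          rw [aux_mem R' hR', aux_mem R' hR']
          rintro ⟨⟨-, p⟩, -, q⟩
          rcases hab with h | h
          · exact h.2 (p b hb)
          · exact h.2 (q a ha)
        exact aux_prop1 e1 e2 o1 o2
      have k1 := k x y hx hy hxy
      have k2 := k y z hy hz hyz
      have k3 := k x z hx hz hxz
      exact aux_prop2 k1 k2 k3)
    (Fintype.card X) univ card_univ
  have hS : ∀ S : Finset X, (symmDiff (MaxSet S R) (MaxSet S R')).card
      + (if Bad S then 1 else 0) ≤ S.card := by
    intro S
    have hsub : symmDiff (MaxSet S R) (MaxSet S R') ⊆ S := by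
      intro x hx
      rw [mem_symmDiff, aux_mem R hR, aux_mem R' hR'] at hx
      tauto
    split_ifs with hb
    · obtain ⟨x, hx, hiff⟩ := hb
      apply Nat.succ_le_of_lt
      apply card_lt_card
      rw [ssubset_iff_of_subset hsub]
      refine ⟨x, hx, ?_⟩
      rw [mem_symmDiff]
      tauto
    · exact card_le_card hsub
  have hsum := sum_le_sum fun S (_ : S ∈ (univ : Finset (Finset X))) => hS S
  rw [sum_add_distrib, aux_sum_card, ← card_filter] at hsum
  rw [powerset_univ] at hcount
  unfold Dtop
  have hfin : ∀ p q t m b c : ℕ, p + t ≤ m → b + c ≤ q + 2 → q = t → p + b + c ≤ m + 2 := by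
    intros; omega
  refine hfin _ _ _ _ _ _ hsum hcount ?_
  congr!

/-! ### The bound is attained -/

theorem aux_rank {X : Type*} (f : X → ℕ) : TotalPreorderRel (fun x y => f x ≤ f y) :=
  ⟨fun _ => le_rfl, fun _ _ _ h h' => le_trans h h', fun _ _ => le_total _ _⟩

theorem aux_one {X : Type*} [DecidableEq X] (e : X → ℕ) (he : Function.Injective e)
    (A S : Finset X) (hSA : S ⊆ A) (f g : X → ℕ) (hf : ∀ x ∈ A, f x = 0)
    (hg : ∀ x ∈ A, g x = e x + 1) :
    S.card ≤ (symmDiff (MaxSet S fun x y => f x ≤ f y) (MaxSet S fun x y => g x ≤ g y)).card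
      + 1 := by
  have h1 : (MaxSet S fun x y => g x ≤ g y).card ≤ 1 := by
    rw [card_le_one]
    intro a ha b hb
    rw [aux_mem _ (aux_rank g)] at ha hb
    have h := le_antisymm (ha.2 b hb.1) (hb.2 a ha.1)
    rw [hg a (hSA ha.1), hg b (hSA hb.1)] at h
    exact he (by omega)
  have h2 : S \ (MaxSet S fun x y => g x ≤ g y) ⊆
      symmDiff (MaxSet S fun x y => f x ≤ f y) (MaxSet S fun x y => g x ≤ g y) := by
    intro x hx
    rw [mem_sdiff] at hx
    rw [mem_symmDiff]
    refine Or.inl ⟨?_, hx.2⟩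
    rw [aux_mem _ (aux_rank f)]
    exact ⟨hx.1, fun y _ => by rw [hf x (hSA hx.1)]; exact Nat.zero_le _⟩
  have h3 := card_le_card h2
  have h4 := le_card_sdiff (MaxSet S fun x y => g x ≤ g y) S
  omega

theorem aux_attain (X : Type*) [Fintype X] [DecidableEq X] :
    ∃ R R' : X → X → Prop, TotalPreorderRel R ∧ TotalPreorderRel R' ∧
      Fintype.card X * 2 ^ (Fintype.card X - 1) + 2 ≤
      Dtop R R' + 2 ^ (Fintype.card X / 2) + 2 ^ ((Fintype.card X + 1) / 2) := by
  obtain ⟨A, -, hA⟩ := exists_subset_card_eq (s := (univ : Finset X)) (n := Fintype.card X / 2)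
    (by rw [card_univ]; omega)
  have hB : (Aᶜ).card = (Fintype.card X + 1) / 2 := by rw [card_compl]; omega
  let e : X → ℕ := fun x => (Fintype.equivFin X x : ℕ)
  have he : Function.Injective e := fun a b h =>
    (Fintype.equivFin X).injective (Fin.ext h)
  let f : X → ℕ := fun x => if x ∈ A then 0 else e x + 1
  let g : X → ℕ := fun x => if x ∈ A then e x + 1 else 0
  refine ⟨fun x y => f x ≤ f y, fun x y => g x ≤ g y, aux_rank f, aux_rank g, ?_⟩
  have hS : ∀ S : Finset X, S.card + (if S = ∅ then 2 else 0) ≤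
      (symmDiff (MaxSet S fun x y => f x ≤ f y) (MaxSet S fun x y => g x ≤ g y)).card
      + (if S ⊆ A then 1 else 0) + (if S ⊆ Aᶜ then 1 else 0) := by
    intro S
    by_cases h0 : S = ∅
    · subst h0; simp
    rw [if_neg h0]
    by_cases hSA : S ⊆ A
    · have := aux_one e he A S hSA f g (fun x hx => by simp [f, hx]) (fun x hx => by simp [g, hx])
      rw [if_pos hSA]
      omega
    by_cases hSB : S ⊆ Aᶜ
    · have := aux_one e he Aᶜ S hSB g f (fun x hx => by simp [g, mem_compl.1 hx])
        (fun x hx => by simp [f, mem_compl.1 hx])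
      rw [symmDiff_comm] at this
      rw [if_pos hSB]
      omega
    rw [if_neg hSA, if_neg hSB, add_zero, add_zero, add_zero]
    apply card_le_card
    obtain ⟨b, hb, hbA⟩ := not_subset.1 hSA
    obtain ⟨a, ha, haA⟩ := not_subset.1 hSB
    rw [mem_compl, not_not] at haA
    intro x hx
    rw [mem_symmDiff, aux_mem _ (aux_rank f), aux_mem _ (aux_rank g)]
    by_cases hxA : x ∈ A
    · refine Or.inl ⟨⟨hx, fun y _ => by simp [f, hxA]⟩, fun h => ?_⟩
      have := h.2 b hb
      simp [g, hxA, hbA] at this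
    · refine Or.inr ⟨⟨hx, fun y _ => by simp [g, hxA]⟩, fun h => ?_⟩
      have := h.2 a ha
      simp [f, hxA, haA] at this
  have hsum := sum_le_sum fun S (_ : S ∈ (univ : Finset (Finset X))) => hS S
  have hp : ∀ B : Finset X, ∑ S : Finset X, (if S ⊆ B then 1 else 0) = 2 ^ B.card := by
    intro B
    rw [← card_filter, ← card_powerset]
    congr 1
    ext S; simp
  rw [sum_add_distrib, sum_add_distrib, sum_add_distrib, aux_sum_card, hp, hp, hA, hB,
    sum_ite_eq' univ ∅ (fun _ => 2), if_pos (mem_univ _)] at hsum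
  exact hsum

/-- Theorem 4.1: the `D`-diameter of the set of total preorders on an
`n`-element set (`n ≥ 2`) equals `n·2^{n−1} + 2 − 2^{⌊n/2⌋} − 2^{⌈n/2⌉}`. -/
theorem stmt_14 {X : Type*} [Fintype X] [DecidableEq X] (hn : 2 ≤ Fintype.card X) :
    (∀ R R' : X → X → Prop, TotalPreorderRel R → TotalPreorderRel R' →
        (Dtop R R' : ℤ) ≤ (Fintype.card X : ℤ) * 2 ^ (Fintype.card X - 1) + 2
          - 2 ^ (Fintype.card X / 2) - 2 ^ ((Fintype.card X + 1) / 2)) ∧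
    (∃ R R' : X → X → Prop, TotalPreorderRel R ∧ TotalPreorderRel R' ∧
        (Dtop R R' : ℤ) = (Fintype.card X : ℤ) * 2 ^ (Fintype.card X - 1) + 2
          - 2 ^ (Fintype.card X / 2) - 2 ^ ((Fintype.card X + 1) / 2)) := by
  refine ⟨fun R R' hR hR' => ?_, ?_⟩
  · have h := aux_upper R R' hR hR'
    zify at h
    linarith
  · obtain ⟨R, R', hR, hR', h⟩ := aux_attain X
    refine ⟨R, R', hR, hR', ?_⟩
    have h' := aux_upper R R' hR hR'
    zify at h h'
    linarith
end

section
/- Let X = {x_1,…,x_n} be a finite set with n ≥ 2 elements and let m ∈ {1,…,n−1}. Let ≿ be the total preorder on X with x_1 ∼ ⋯ ∼ x_m ≻ x_{m+1} ≻ ⋯ ≻ x_n and ≿' the total preorder on X with x_{m+1} ∼' ⋯ ∼' x_n ≻' x_1 ≻' ⋯ ≻' x_m (where ≻, ∼ and ≻', ∼' are the respective asymmetric and symmetric parts). Then D(≿,≿') = n·2^{n−1} + 2 − 2^m − 2^{n−m}. -/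
open Classical Finset symmDiff

/-- Rank function of the total preorder `x_1 ∼ ⋯ ∼ x_m ≻ x_{m+1} ≻ ⋯ ≻ x_n`
(smaller rank = better). -/
def rnkA (m : ℕ) {n : ℕ} (i : Fin n) : ℕ := if (i : ℕ) < m then 0 else (i : ℕ) - m + 1

/-- Rank function of the total preorder `x_{m+1} ∼ ⋯ ∼ x_n ≻ x_1 ≻ ⋯ ≻ x_m`
(smaller rank = better). -/
def rnkB (m : ℕ) {n : ℕ} (i : Fin n) : ℕ := if m ≤ (i : ℕ) then 0 else (i : ℕ) + 1

theorem sum_card_aux {X : Type*} [Fintype X] [DecidableEq X] :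
    2 * ∑ S : Finset X, S.card = Fintype.card X * 2 ^ Fintype.card X := by
  have h1 : ∑ S : Finset X, S.card = ∑ S : Finset X, (Sᶜ).card :=
    (Function.Bijective.sum_comp (compl_bijective (α := Finset X)) Finset.card).symm
  rw [two_mul]
  nth_rewrite 2 [h1]
  rw [← Finset.sum_add_distrib]
  simp [Finset.card_add_card_compl, mul_comm]

theorem key_aux {X : Type*} [Fintype X] [DecidableEq X] {n m : ℕ} (e : Fin n ≃ X) (S : Finset X) :
    (symmDiff (MaxSet S (fun x y => rnkA m (e.symm x) ≤ rnkA m (e.symm y)))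
      (MaxSet S (fun x y => rnkB m (e.symm x) ≤ rnkB m (e.symm y)))).card
     + (if S ∈ (univ.filter fun x => (e.symm x : ℕ) < m).powerset then 1 else 0)
     + (if S ∈ (univ.filter fun x => ¬ (e.symm x : ℕ) < m).powerset then 1 else 0)
     = S.card + (if S = ∅ then 2 else 0) := by
  rcases S.eq_empty_or_nonempty with rfl | hS
  · simp [MaxSet]
  obtain ⟨x0, hx0, hmin⟩ := S.exists_min_image (fun x => (e.symm x : ℕ)) hS
  have hinj : ∀ x y : X, (e.symm x : ℕ) = e.symm y → x = y := fun x y h =>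
    e.symm.injective (Fin.ext h)
  have hc : (S.erase x0).card + 1 = S.card := Finset.card_erase_add_one hx0
  have hne : S ≠ ∅ := hS.ne_empty
  simp only [mem_powerset, hne, if_false, subset_iff, mem_filter, mem_univ, true_and]
  by_cases hA : ∀ x, x ∈ S → (e.symm x : ℕ) < m
  · have hB : ¬ ∀ x, x ∈ S → ¬ (e.symm x : ℕ) < m := fun h => h x0 hx0 (hA x0 hx0)
    rw [if_pos (fun x hx => hA x hx), if_neg (fun h => hB (fun x hx => h hx))]
    have : symmDiff (MaxSet S (fun x y => rnkA m (e.symm x) ≤ rnkA m (e.symm y)))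
      (MaxSet S (fun x y => rnkB m (e.symm x) ≤ rnkB m (e.symm y))) = S.erase x0 := by
      ext x
      simp only [mem_symmDiff, MaxSet, mem_filter, asymPart, mem_erase, rnkA, rnkB]
      grind
    rw [this]; omega
  · by_cases hB : ∀ x, x ∈ S → ¬ (e.symm x : ℕ) < m
    · rw [if_pos (fun x hx => hB x hx), if_neg (fun h => hA (fun x hx => h hx))]
      have : symmDiff (MaxSet S (fun x y => rnkA m (e.symm x) ≤ rnkA m (e.symm y)))
        (MaxSet S (fun x y => rnkB m (e.symm x) ≤ rnkB m (e.symm y))) = S.erase x0 := by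
        ext x
        simp only [mem_symmDiff, MaxSet, mem_filter, asymPart, mem_erase, rnkA, rnkB]
        grind
      rw [this]; omega
    · rw [if_neg (fun h => hA (fun x hx => h hx)), if_neg (fun h => hB (fun x hx => h hx))]
      have : symmDiff (MaxSet S (fun x y => rnkA m (e.symm x) ≤ rnkA m (e.symm y)))
        (MaxSet S (fun x y => rnkB m (e.symm x) ≤ rnkB m (e.symm y))) = S := by
        push Not at hA hB
        obtain ⟨a, ha, ha'⟩ := hA
        obtain ⟨b, hb, hb'⟩ := hB
        ext x
        simp only [mem_symmDiff, MaxSet, mem_filter, asymPart, rnkA, rnkB]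
        grind
      rw [this]

/-- for `X = {x_1,…,x_n}` and `1 ≤ m ≤ n−1`, the distance between the
total preorders `x_1 ∼ ⋯ ∼ x_m ≻ x_{m+1} ≻ ⋯ ≻ x_n` and
`x_{m+1} ∼' ⋯ ∼' x_n ≻' x_1 ≻' ⋯ ≻' x_m` equals `n·2^{n−1} + 2 − 2^m − 2^{n−m}`. -/
theorem stmt_15 {X : Type*} [Fintype X] [DecidableEq X]
    {n m : ℕ} (hn : 2 ≤ n) (hm1 : 1 ≤ m) (hm2 : m ≤ n - 1)
    (e : Fin n ≃ X) :
    (Dtop (fun x y => rnkA m (e.symm x) ≤ rnkA m (e.symm y))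
          (fun x y => rnkB m (e.symm x) ≤ rnkB m (e.symm y)) : ℤ)
      = (n : ℤ) * 2 ^ (n - 1) + 2 - 2 ^ m - 2 ^ (n - m) := by
  have hcard : Fintype.card X = n := by rw [← Fintype.card_congr e, Fintype.card_fin]
  have hsum := Finset.sum_congr (rfl : (univ : Finset (Finset X)) = univ)
    (fun S _ => key_aux (m := m) e S)
  rw [Finset.sum_add_distrib, Finset.sum_add_distrib, Finset.sum_add_distrib] at hsum
  rw [Finset.sum_ite_mem, Finset.sum_ite_mem, Finset.sum_ite_eq'] at hsum
  simp only [univ_inter, sum_const, card_powerset, smul_eq_mul, mul_one, mem_univ, if_true] at hsum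
  have c1 : (univ.filter fun x : X => (e.symm x : ℕ) < m).card = m := by
    have : (univ.filter fun x : X => (e.symm x : ℕ) < m)
        = (univ.filter fun i : Fin n => (i : ℕ) < m).map e.toEmbedding := by
      ext x; simp [Finset.mem_map_equiv]
    rw [this, card_map, Fin.card_filter_val_lt]
    omega
  have c2 : (univ.filter fun x : X => ¬ (e.symm x : ℕ) < m).card = n - m := by
    have := Finset.card_filter_add_card_filter_not (s := (univ : Finset X))
      (fun x : X => (e.symm x : ℕ) < m)
    rw [c1, card_univ, hcard] at this
    omega
  rw [c1, c2] at hsum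
  have h2 := sum_card_aux (X := X)
  rw [hcard] at h2
  obtain ⟨k, rfl⟩ : ∃ k, n = k + 1 := ⟨n - 1, by omega⟩
  have h3 : ∑ S : Finset X, S.card = (k + 1) * 2 ^ k := by
    rw [pow_succ] at h2; linarith
  rw [h3] at hsum
  change Dtop (fun x y => rnkA m (e.symm x) ≤ rnkA m (e.symm y))
    (fun x y => rnkB m (e.symm x) ≤ rnkB m (e.symm y)) + _ + _ = _ at hsum
  generalize Dtop (fun x y => rnkA m (e.symm x) ≤ rnkA m (e.symm y))
    (fun x y => rnkB m (e.symm x) ≤ rnkB m (e.symm y)) = D at hsum ⊢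
  zify at hsum
  rw [Nat.add_sub_cancel]
  push_cast at hsum ⊢
  linarith
end

section
/- Let X be a finite set, μ a positive measure on 2^X, and ≿ an antisymmetric acyclic order on X. Then for every transitive extension ⊵ of ≿, D^μ(≿,⊵) = D^μ(≿, tran(≿)) + D^μ(tran(≿), ⊵); in particular, D^μ(≿, tran(≿)) ≤ D^μ(≿,⊵) for every transitive extension ⊵ of ≿, so the transitive closure tran(≿) is a best transitive extension of ≿ with respect to D^μ. -/
open Classical Finset symmDiff

/-- `Q` is a transitive extension of the acyclic order `R`. -/
def TransExt {X : Type*} (R Q : X → X → Prop) : Prop :=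
  Reflexive Q ∧ Transitive Q ∧ ∀ x y, asymPart R x y → asymPart Q x y

/-- Theorem 5.1: the transitive closure of an antisymmetric acyclic
order `≿` is its unique-best transitive extension relative to `D^μ`: for every
transitive extension `⊵`, `D^μ(≿,⊵) = D^μ(≿,tran(≿)) + D^μ(tran(≿),⊵)`, and in
particular `D^μ(≿,tran(≿)) ≤ D^μ(≿,⊵)`. -/
theorem stmt_16 {X : Type*} [Fintype X] [DecidableEq X]
    (w : X → ℝ) (hw : ∀ x, 0 ≤ w x)
    (R : X → X → Prop) (hR : AcyclicOrd R) (hanti : AntiSymmetric R)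
    (Q : X → X → Prop) (hQ : TransExt R Q) :
    Dmu w R Q = Dmu w R (Relation.TransGen R) + Dmu w (Relation.TransGen R) Q ∧
    Dmu w R (Relation.TransGen R) ≤ Dmu w R Q := by
  obtain ⟨-, hQt, hQe⟩ := hQ
  have key : ∀ x y, Relation.TransGen R x y → x = y ∨ asymPart Q x y := by
    have step : ∀ x y, R x y → x = y ∨ asymPart Q x y := by
      intro x y h
      by_cases h' : R y x
      · exact Or.inl (hanti h h')
      · exact Or.inr (hQe x y ⟨h, h'⟩)
    intro x y h
    induction h with
    | single h => exact step _ _ h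
    | tail _ h ih =>
      rcases step _ _ h with rfl | h2
      · exact ih
      · rcases ih with rfl | h1
        · exact Or.inr h2
        · exact Or.inr ⟨hQt h1.1 h2.1, fun h3 => h1.2 (hQt h2.1 h3)⟩
  have hTQ : ∀ x y, asymPart (Relation.TransGen R) x y → asymPart Q x y := by
    intro x y h
    rcases key x y h.1 with rfl | h1
    · exact absurd h.1 h.2
    · exact h1
  have hRT : ∀ x y, asymPart R x y → asymPart (Relation.TransGen R) x y := by
    intro x y h
    refine ⟨Relation.TransGen.single h.1, fun h' => ?_⟩
    rcases key y x h' with rfl | h1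
    · exact h.2 h.1
    · exact h1.2 (hQe x y h).1
  have mono : ∀ (A B : X → X → Prop), (∀ x y, asymPart A x y → asymPart B x y) →
      ∀ S : Finset X, MaxSet S B ⊆ MaxSet S A := by
    intro A B h S x hx
    simp only [MaxSet, Finset.mem_filter] at hx ⊢
    exact ⟨hx.1, fun y hy hA => hx.2 y hy (h y x hA)⟩
  have form : ∀ (A B : X → X → Prop), (∀ x y, asymPart A x y → asymPart B x y) →
      Dmu w A B = ∑ S : Finset X, (∑ x ∈ MaxSet S A, w x - ∑ x ∈ MaxSet S B, w x) := by
    intro A B h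
    unfold Dmu
    refine Finset.sum_congr rfl fun S _ => ?_
    have hs := mono A B h S
    rw [symmDiff_of_ge (Finset.le_iff_subset.mpr hs), eq_sub_iff_add_eq]
    exact Finset.sum_sdiff hs
  have e : Dmu w R Q = Dmu w R (Relation.TransGen R) + Dmu w (Relation.TransGen R) Q := by
    rw [form R Q hQe, form _ _ hRT, form _ _ hTQ, ← Finset.sum_add_distrib]
    exact Finset.sum_congr rfl fun S _ => by ring
  have nn : 0 ≤ Dmu w (Relation.TransGen R) Q :=
    Finset.sum_nonneg fun S _ => Finset.sum_nonneg fun x _ => hw x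
  exact ⟨e, by linarith⟩
end

section
/- Let X be a finite set and ≿ an antisymmetric acyclic order on X with asymmetric part ≻. Then the transitive closure tran(≿) is a partial order on X, and for every transitive extension ⊵ of ≿ (with asymmetric part ⊳) one has ≻ ⊆ tran(≿)^> ⊆ ⊳, where tran(≿)^> is the asymmetric part of tran(≿). -/
open Classical Finset symmDiff

theorem aux_walk {X : Type*} (P : X → X → Prop) {x y : X} (h : Relation.TransGen P x y) :
    ∃ n : ℕ, 0 < n ∧ ∃ f : ℕ → X, f 0 = x ∧ f n = y ∧ ∀ i < n, P (f i) (f (i + 1)) := by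
  induction h with
  | single h =>
    rename_i b
    exact ⟨1, one_pos, fun t => if t = 0 then x else b, by simp, by simp, by
      intro i hi
      have : i = 0 := by omega
      subst this
      simpa using h⟩
  | tail _ hbc ih =>
    rename_i b c _
    obtain ⟨n, hn, f, h0, h1, hf⟩ := ih
    refine ⟨n + 1, by omega, fun t => if t ≤ n then f t else c, by simpa using h0, by simp, ?_⟩
    intro i hi
    by_cases hin : i = n
    · subst hin
      simpa [h1] using hbc
    · have h2 : i ≤ n := by omega
      have h3 : i + 1 ≤ n := by omega
      simpa only [if_pos h2, if_pos h3] using hf i (by omega)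

theorem aux_irrefl {X : Type*} (R : X → X → Prop) (hR : AcyclicRel R) (x : X) :
    ¬ Relation.TransGen (asymPart R) x x := by
  intro h
  obtain ⟨n, hn, f, h0, h1, hf⟩ := aux_walk _ h
  have hex : ∃ n : ℕ, 0 < n ∧ ∃ f : ℕ → X, f 0 = f n ∧
      ∀ i < n, asymPart R (f i) (f (i + 1)) := ⟨n, hn, f, h0.trans h1.symm, hf⟩
  clear hf h1 h0 f hn n
  obtain ⟨hn, f, h0, hf⟩ := Nat.find_spec hex
  have hmin := fun m => Nat.find_min (m := m) hex
  generalize Nat.find hex = n at *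
  have key : ∀ i j, i < j → j < n → f i ≠ f j := by
    intro i j hij hj he
    refine hmin (j - i) (by omega) ⟨by omega, fun t => f (i + t), ?_, ?_⟩
    · simpa [show i + (j - i) = j by omega] using he
    · intro t ht
      exact hf (i + t) (by omega)
  obtain ⟨k, rfl⟩ : ∃ k, n = k + 1 := ⟨n - 1, by omega⟩
  apply hR
  refine ⟨k, fun i => f i, ?_, ?_⟩
  · intro i j he
    rcases lt_trichotomy i.val j.val with h | h | h
    · exact absurd he (key _ _ h j.2)
    · exact Fin.ext h
    · exact absurd he.symm (key _ _ h i.2)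
  · intro i
    have h := hf i i.2
    by_cases hi : i = Fin.last k
    · subst hi
      simp only [Fin.last_add_one, Fin.val_zero, Fin.val_last] at h ⊢
      rw [h0]
      exact h
    · have : ((i + 1 : Fin (k + 1)) : ℕ) = i + 1 :=
        Fin.val_add_one_of_lt (Fin.lt_last_iff_ne_last.2 hi)
      simp only [this]
      exact h

theorem aux_split_s17 {X : Type*} (R : X → X → Prop) (hanti : AntiSymmetric R) {x y : X}
    (h : Relation.TransGen R x y) : x = y ∨ Relation.TransGen (asymPart R) x y := by
  have step : ∀ a b, R a b → a = b ∨ asymPart R a b := by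
    intro a b hab
    by_cases hba : R b a
    · exact Or.inl (hanti hab hba)
    · exact Or.inr ⟨hab, hba⟩
  induction h with
  | single h => exact (step _ _ h).imp id .single
  | tail _ hbc ih =>
    rcases step _ _ hbc with rfl | h
    · exact ih
    · rcases ih with rfl | h'
      · exact Or.inr (.single h)
      · exact Or.inr (h'.tail h)

/-- Lemma 5.2: for an antisymmetric acyclic order `≿` on a finite set,
`tran(≿)` is a partial order, and `≻ ⊆ tran(≿)^> ⊆ ⊳` for every transitive extension
`⊵` of `≿`. -/
theorem stmt_17 {X : Type*} [Fintype X]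
    (R : X → X → Prop) (hR : AcyclicOrd R) (hanti : AntiSymmetric R) :
    (Reflexive (Relation.TransGen R) ∧ Transitive (Relation.TransGen R) ∧
      AntiSymmetric (Relation.TransGen R)) ∧
    (∀ x y, asymPart R x y → asymPart (Relation.TransGen R) x y) ∧
    (∀ Q : X → X → Prop, TransExt R Q →
      ∀ x y, asymPart (Relation.TransGen R) x y → asymPart Q x y) := by
  have hirr := aux_irrefl R hR.2
  refine ⟨⟨fun x => .single (hR.1 x), fun _ _ _ h h' => h.trans h', ?_⟩, ?_, ?_⟩
  · intro x y h h'
    rcases aux_split_s17 R hanti h with e | g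
    · exact e
    · rcases aux_split_s17 R hanti h' with e | h'
      · exact e.symm
      · exact absurd (g.trans h') (hirr x)
  · intro x y h
    refine ⟨.single h.1, fun h' => ?_⟩
    rcases aux_split_s17 R hanti h' with e | h'
    · subst e
      exact h.2 h.1
    · exact hirr x ((Relation.TransGen.single h).trans h')
  · rintro Q ⟨_, htr, hQ⟩ x y ⟨h, h'⟩
    rcases aux_split_s17 R hanti h with e | g
    · subst e
      exact absurd h h'
    · clear h h'
      induction g with
      | single h => exact hQ _ _ h
      | tail _ hbc ih =>
        have h2 := hQ _ _ hbc
        exact ⟨htr ih.1 h2.1, fun hc => h2.2 (htr hc ih.1)⟩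
end

section
/- Let X be a finite set, ≿ an antisymmetric acyclic order on X that is not transitive (so that tran(≿) ≠ ≿), and ⊵ a transitive extension of ≿. Then the transitive closure tran(≿) is in-between ≿ and ⊵. -/
open Classical Finset symmDiff

theorem acyclic_of_sub {X : Type*} (R Q : X → X → Prop) (hQ : Transitive Q)
    (h : ∀ x y, R x y → x ≠ y → asymPart Q x y) : AcyclicRel R := by
  rintro ⟨k, z, -, hz⟩
  have hz' : ∀ i, asymPart Q (z i) (z (i + 1)) := by
    intro i
    refine h _ _ (hz i).1 ?_
    intro e
    have := hz i
    rw [← e] at this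
    exact this.2 this.1
  have key : ∀ n : ℕ, asymPart Q (z 0) (z (Fin.ofNat (k + 1) (n + 1))) := by
    intro n
    induction n with
    | zero =>
      have h1 : Fin.ofNat (k + 1) (0 + 1) = 0 + 1 := by
        apply Fin.ext
        simp [Fin.val_add, Fin.ofNat]
      rw [h1]
      exact hz' 0
    | succ n ih =>
      have h2 := hz' (Fin.ofNat (k + 1) (n + 1))
      have h1 : Fin.ofNat (k + 1) (n + 1 + 1) = Fin.ofNat (k + 1) (n + 1) + 1 := by
        apply Fin.ext
        simp [Fin.val_add, Fin.ofNat]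
      rw [h1]
      exact ⟨hQ ih.1 h2.1, fun hh => ih.2 (hQ h2.1 hh)⟩
  have h0 := key k
  have h1 : Fin.ofNat (k + 1) (k + 1) = 0 := by
    apply Fin.ext
    simp [Fin.ofNat]
  rw [h1] at h0
  exact h0.2 h0.1

theorem inBetween_cons {X : Type*} {R R0 Q P : X → X → Prop} (h : OneStep R R0 Q)
    (h' : R0 = P ∨ InBetween R0 Q P) : InBetween R Q P := by
  rcases h' with rfl | ⟨n, c, h0, hs, hl⟩
  · exact ⟨0, fun _ => R0, h, fun i => i.elim0, rfl⟩
  · refine ⟨n + 1, Fin.cons R0 c, by simpa using h, ?_, ?_⟩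
    · intro i
      refine Fin.cases ?_ (fun j => ?_) i
      · simpa using h0
      · rw [Fin.castSucc_succ, Fin.cons_succ, Fin.cons_succ]
        exact hs j
    · rw [← Fin.succ_last, Fin.cons_succ]
      exact hl

theorem inBetween_aux {X : Type*} [Fintype X] (T Q : X → X → Prop) (hQ : Transitive Q)
    (hT : ∀ x y, T x y → x ≠ y → asymPart Q x y) :
    ∀ (n : ℕ) (S : X → X → Prop), Reflexive S → (∀ x y, S x y → T x y) →
      {p : X × X | T p.1 p.2 ∧ ¬ S p.1 p.2}.ncard = n → S = T ∨ InBetween S Q T := by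
  intro n
  induction n using Nat.strong_induction_on with
  | _ n ih =>
    intro S hr hS hn
    by_cases hST : S = T
    · exact Or.inl hST
    right
    obtain ⟨a, b, hab, hnab⟩ : ∃ a b, T a b ∧ ¬ S a b := by
      by_contra! hcon
      exact hST (funext fun x => funext fun y => propext ⟨hS x y, hcon x y⟩)
    have hne : a ≠ b := by
      rintro rfl
      exact hnab (hr a)
    have hqab := hT a b hab hne
    have hnba : ¬ S b a := fun hh => hqab.2 (hT b a (hS _ _ hh) hne.symm).1
    have hop : ∀ x y, oplusR S a b x y ↔ S x y ∨ (x = a ∧ y = b) := by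
      intro x y
      unfold oplusR
      tauto
    have hr' : Reflexive (oplusR S a b) := fun x => (hop x x).2 (Or.inl (hr x))
    have hS' : ∀ x y, oplusR S a b x y → T x y := by
      intro x y hh
      rcases (hop x y).1 hh with h1 | ⟨rfl, rfl⟩
      · exact hS _ _ h1
      · exact hab
    refine inBetween_cons (R0 := oplusR S a b) ⟨⟨hr', ?_⟩, Or.inr ⟨a, b, ?_, ?_, hqab, rfl⟩⟩ ?_
    · exact acyclic_of_sub _ Q hQ fun x y hh => hT x y (hS' x y hh)
    · exact fun hh => hnab hh.1
    · exact fun hh => hnba hh.1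
    · refine ih _ ?_ _ hr' hS' rfl
      rw [← hn]
      refine Set.ncard_lt_ncard ?_ (Set.toFinite _)
      refine ⟨fun p hp => ⟨hp.1, fun hh => hp.2 ((hop _ _).2 (Or.inl hh))⟩, fun hcon => ?_⟩
      have := @hcon (a, b) ⟨hab, hnab⟩
      exact this.2 ((hop _ _).2 (Or.inr ⟨rfl, rfl⟩))

/-- Lemma 5.3: if `≿` is a non-transitive antisymmetric acyclic order
on a finite set and `⊵` is a transitive extension of `≿`, then `tran(≿)` is
in-between `≿` and `⊵`. -/
theorem stmt_18 {X : Type*} [Fintype X]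
    (R : X → X → Prop) (hR : AcyclicOrd R) (hanti : AntiSymmetric R)
    (hnt : ¬ Transitive R)
    (Q : X → X → Prop) (hQ : TransExt R Q) :
    InBetween R Q (fun x y => Relation.TransGen R x y) := by
  obtain ⟨hr, -⟩ := hR
  obtain ⟨-, hQt, hQe⟩ := hQ
  have hbase : ∀ x y, R x y → x ≠ y → asymPart Q x y := fun x y hxy hne =>
    hQe x y ⟨hxy, fun hyx => hne (hanti hxy hyx)⟩
  have hT' : ∀ x y, Relation.TransGen R x y → x = y ∨ asymPart Q x y := by
    intro x y hxy
    induction hxy with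
    | single h1 => exact or_iff_not_imp_left.2 (hbase _ _ h1)
    | @tail b c _ h2 ih =>
      by_cases e : b = c
      · subst e
        exact ih
      · have h3 := hbase _ _ h2 e
        rcases ih with rfl | ih
        · exact Or.inr h3
        · exact Or.inr ⟨hQt ih.1 h3.1, fun hh => ih.2 (hQt h3.1 hh)⟩
  have hT : ∀ x y, Relation.TransGen R x y → x ≠ y → asymPart Q x y :=
    fun x y hxy hne => (hT' x y hxy).resolve_left hne
  rcases inBetween_aux (fun x y => Relation.TransGen R x y) Q hQt hT _ R hr
    (fun x y hxy => Relation.TransGen.single hxy) rfl with h | h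
  · exfalso
    apply hnt
    intro x y z hxy hyz
    rw [h]
    exact (Relation.TransGen.single hxy).tail hyz
  · exact h
end

section
/- Let X be a finite set with |X| ≥ 3 and let μ be a positive measure on 2^X with μ({x}) > 0 for every x ∈ X. Then the metric space (P*(X), D^μ) of partial orders on X cannot be isometrically embedded in any strictly convex real normed linear space: for every strictly convex real normed linear space E, there is no map φ : P*(X) → E satisfying ‖φ(≿) − φ(⊵)‖ = D^μ(≿,⊵) for all partial orders ≿, ⊵ on X. -/
open Classical Finset symmDiff

/-- The partial order whose strict pairs are `(x, c)` with `p x`. -/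
def fanRel {X : Type*} (c : X) (p : X → Prop) : X → X → Prop :=
  fun x y => x = y ∨ (p x ∧ y = c)

lemma fanRel_po {X : Type*} (c : X) (p : X → Prop) (hp : ¬ p c) :
    Reflexive (fanRel c p) ∧ Transitive (fanRel c p) ∧ AntiSymmetric (fanRel c p) := by
  refine ⟨fun x => Or.inl rfl, ?_, ?_⟩
  · rintro x y z (rfl | ⟨h, rfl⟩) (rfl | ⟨h', rfl⟩)
    · exact Or.inl rfl
    · exact Or.inr ⟨h', rfl⟩
    · exact Or.inr ⟨h, rfl⟩
    · exact absurd h' hp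
  · rintro x y (rfl | ⟨h, rfl⟩) (h1 | ⟨h', rfl⟩)
    · rfl
    · rfl
    · exact h1.symm
    · rfl

lemma asymPart_fanRel {X : Type*} (c : X) (p : X → Prop) (hp : ¬ p c) (x y : X) :
    asymPart (fanRel c p) x y ↔ p x ∧ y = c := by
  unfold asymPart fanRel
  constructor
  · rintro ⟨rfl | h, h2⟩
    · exact absurd (Or.inl rfl) h2
    · exact h
  · rintro ⟨h, rfl⟩
    refine ⟨Or.inr ⟨h, rfl⟩, ?_⟩
    rintro (rfl | ⟨h', _⟩)
    · exact hp h
    · exact hp h'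

lemma Dmu_fanRel {X : Type*} [Fintype X] [DecidableEq X] (w : X → ℝ) (c : X)
    (p q : X → Prop) (hp : ¬ p c) (hq : ¬ q c) :
    Dmu w (fanRel c p) (fanRel c q) =
      ∑ S : Finset X, if c ∈ S ∧ ¬ ((∃ y ∈ S, p y) ↔ (∃ y ∈ S, q y)) then w c else 0 := by
  unfold Dmu
  refine Finset.sum_congr rfl fun S _ => ?_
  have key : symmDiff (MaxSet S (fanRel c p)) (MaxSet S (fanRel c q)) =
      if c ∈ S ∧ ¬ ((∃ y ∈ S, p y) ↔ (∃ y ∈ S, q y)) then {c} else ∅ := by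
    ext x
    simp only [Finset.mem_symmDiff, MaxSet, Finset.mem_filter, asymPart_fanRel c p hp,
      asymPart_fanRel c q hq]
    by_cases hx : x = c
    · subst hx
      split_ifs with h
      · simp only [Finset.mem_singleton, and_true, iff_true]
        grind
      · simp only [Finset.notMem_empty, and_true, iff_false]
        grind
    · split_ifs with h <;> simp [hx]
  rw [key]
  split_ifs <;> simp

lemma Dmu_fan_pos {X : Type*} [Fintype X] [DecidableEq X] (w : X → ℝ) (hw : ∀ x, 0 < w x)
    (c : X) (p q : X → Prop) (hp : ¬ p c) (hq : ¬ q c) (S : Finset X) (hc : c ∈ S)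
    (hS : ¬ ((∃ y ∈ S, p y) ↔ (∃ y ∈ S, q y))) :
    0 < Dmu w (fanRel c p) (fanRel c q) := by
  rw [Dmu_fanRel w c p q hp hq]
  refine Finset.sum_pos' (fun S _ => ?_) ⟨S, Finset.mem_univ _, ?_⟩
  · split_ifs
    · exact (hw c).le
    · exact le_rfl
  · rw [if_pos ⟨hc, hS⟩]
    exact hw c

lemma Dmu_fan_add {X : Type*} [Fintype X] [DecidableEq X] (w : X → ℝ)
    (c : X) (p q : X → Prop) (hp : ¬ p c) (hq : ¬ q c) (hpq : ∀ x, p x → q x) :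
    Dmu w (fanRel c fun _ => False) (fanRel c p) + Dmu w (fanRel c p) (fanRel c q) =
      Dmu w (fanRel c fun _ => False) (fanRel c q) := by
  rw [Dmu_fanRel w c _ _ (fun h => h) hp, Dmu_fanRel w c _ _ hp hq,
    Dmu_fanRel w c _ _ (fun h => h) hq, ← Finset.sum_add_distrib]
  refine Finset.sum_congr rfl fun S _ => ?_
  have : (∃ y ∈ S, p y) → (∃ y ∈ S, q y) := fun ⟨y, hy, h⟩ => ⟨y, hy, hpq y h⟩
  by_cases h1 : c ∈ S <;> by_cases h2 : ∃ y ∈ S, p y <;> by_cases h3 : ∃ y ∈ S, q y <;>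
    simp only [h1, h2, h3] <;> simp_all

lemma Dmu_fan_swap {X : Type*} [Fintype X] [DecidableEq X] (w : X → ℝ)
    (a b c : X) (hac : a ≠ c) (hbc : b ≠ c) :
    Dmu w (fanRel c fun _ => False) (fanRel c fun x => x = a) =
      Dmu w (fanRel c fun _ => False) (fanRel c fun x => x = b) := by
  rw [Dmu_fanRel w c _ _ (fun h => h) hac.symm, Dmu_fanRel w c _ _ (fun h => h) hbc.symm,
    ← Equiv.sum_comp (Equiv.finsetCongr (Equiv.swap a b))]
  refine Finset.sum_congr rfl fun S _ => ?_
  have h : ∀ x, x ∈ (Equiv.finsetCongr (Equiv.swap a b)) S ↔ Equiv.swap a b x ∈ S := by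
    intro x
    simp [Equiv.finsetCongr_apply, Finset.mem_map_equiv]
  simp [h, Equiv.swap_apply_of_ne_of_ne hac.symm hbc.symm]

/-- Proposition 6.1: for `|X| ≥ 3` and a measure with strictly positive
weights, the metric space of partial orders on `X` with the metric `D^μ` cannot be
isometrically embedded in any strictly convex real normed linear space. -/
theorem stmt_19 {X : Type*} [Fintype X] [DecidableEq X]
    (h3 : 3 ≤ Fintype.card X)
    (w : X → ℝ) (hw : ∀ x, 0 < w x)
    (E : Type*) [NormedAddCommGroup E] [NormedSpace ℝ E] [StrictConvexSpace ℝ E] :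
    ¬ ∃ φ : (X → X → Prop) → E,
        ∀ R R' : X → X → Prop,
          (Reflexive R ∧ Transitive R ∧ AntiSymmetric R) →
          (Reflexive R' ∧ Transitive R' ∧ AntiSymmetric R') →
          ‖φ R - φ R'‖ = Dmu w R R' := by
  rintro ⟨φ, hφ⟩
  obtain ⟨a, b, c, hab, hac, hbc⟩ := Fintype.two_lt_card_iff.1 (show 2 < Fintype.card X by omega)
  have h0 : ¬ (fun _ : X => False) c := fun h => h
  have ha : ¬ (fun x : X => x = a) c := hac.symm
  have hb : ¬ (fun x : X => x = b) c := hbc.symm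
  have hq : ¬ (fun x : X => x = a ∨ x = b) c := fun h => h.elim ha hb
  have e1 := Dmu_fan_add w c (fun x => x = a) (fun x => x = a ∨ x = b) ha hq (fun x h => Or.inl h)
  have e2 := Dmu_fan_add w c (fun x => x = b) (fun x => x = a ∨ x = b) hb hq (fun x h => Or.inr h)
  have e3 := Dmu_fan_swap w a b c hac hbc
  have p1 := Dmu_fan_pos w hw c (fun _ => False) (fun x => x = a ∨ x = b) h0 hq {a, c} (by simp) (by simp)
  have p2 := Dmu_fan_pos w hw c (fun x => x = a) (fun x => x = b) ha hb {a, c} (by simp) (by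
    simp [hab, hab.symm, hbc, hbc.symm])
  have d : ∀ p q : X → Prop, ¬ p c → ¬ q c →
      dist (φ (fanRel c p)) (φ (fanRel c q)) = Dmu w (fanRel c p) (fanRel c q) := by
    intro p q hp hq
    rw [dist_eq_norm]
    exact hφ _ _ (fanRel_po c p hp) (fanRel_po c q hq)
  rw [← d (fun _ => False) (fun x => x = a) h0 ha, ← d (fun x => x = a) (fun x => x = a ∨ x = b) ha hq, ← d (fun _ => False) (fun x => x = a ∨ x = b) h0 hq] at e1
  rw [← d (fun _ => False) (fun x => x = b) h0 hb, ← d (fun x => x = b) (fun x => x = a ∨ x = b) hb hq, ← d (fun _ => False) (fun x => x = a ∨ x = b) h0 hq] at e2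
  rw [← d (fun _ => False) (fun x => x = a) h0 ha, ← d (fun _ => False) (fun x => x = b) h0 hb] at e3
  rw [← d (fun _ => False) (fun x => x = a ∨ x = b) h0 hq] at p1
  rw [← d (fun x => x = a) (fun x => x = b) ha hb] at p2
  generalize φ (fanRel c fun _ => False) = x at *
  generalize φ (fanRel c fun x => x = a) = y at *
  generalize φ (fanRel c fun x => x = b) = y' at *
  generalize φ (fanRel c fun x => x = a ∨ x = b) = z at *
  have r1 : y = AffineMap.lineMap x z (dist x y / dist x z) := by
    apply eq_lineMap_of_dist_eq_mul_of_dist_eq_mul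
    · field_simp
    · field_simp
      linarith
  have r2 : y' = AffineMap.lineMap x z (dist x y / dist x z) := by
    apply eq_lineMap_of_dist_eq_mul_of_dist_eq_mul
    · rw [← e3]
      field_simp
    · field_simp
      linarith
  rw [← r1] at r2
  rw [r2, dist_self] at p2
  exact lt_irrefl _ p2
end
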